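/- arXiv:1207.3262 — 5 statements merged into one kernel-verified Lean document; each statement's English description precedes it below -/
import Mathlib

section
/- Soundness of canonized rewriting (Lemma 4.2 instantiated with the AC canonizer): fix a linear order ⊴ on ground terms. For all ground terms s, t', l, r, if s rewrites to t' modulo AC by the rule l → r (i.e. s →_{AC\l→r} t') and t = can_AC(t'), then s =_{AC∪{(l,r)}} t, i.e. s and t are equal in the smallest congruence on ground terms containing AC-equality and the pair (l, r). -/
/-- Ground terms over uninterpreted symbols `F` (with arities `ar`) and AC symbols `U`:
`app f ts` applies `f : F` to a tuple of `ar f` terms, `node u t₁ t₂` is `u(t₁,t₂)`. -/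
inductive T (F : Type) (ar : F → ℕ) (U : Type) : Type where
  | app : (f : F) → (Fin (ar f) → T F ar U) → T F ar U
  | node : U → T F ar U → T F ar U → T F ar U

variable (F : Type) (ar : F → ℕ) (U : Type)

/-- `EqACE E s t` : the smallest congruence on ground terms containing AC-equalities
(commutativity and associativity of every AC symbol) and the pairs of `E`. -/
inductive EqACE (E : Set (T F ar U × T F ar U)) : T F ar U → T F ar U → Prop where
  | ax : ∀ {s t : T F ar U}, (s, t) ∈ E → EqACE E s t
  | refl : ∀ t : T F ar U, EqACE E t t
  | symm : ∀ {s t : T F ar U}, EqACE E s t → EqACE E t s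
  | trans : ∀ {s t w : T F ar U}, EqACE E s t → EqACE E t w → EqACE E s w
  | congr_app : ∀ (f : F) (ts ts' : Fin (ar f) → T F ar U),
      (∀ i, EqACE E (ts i) (ts' i)) → EqACE E (.app f ts) (.app f ts')
  | congr_node : ∀ (u : U) {s₁ t₁ s₂ t₂ : T F ar U}, EqACE E s₁ t₁ → EqACE E s₂ t₂ →
      EqACE E (.node u s₁ s₂) (.node u t₁ t₂)
  | comm : ∀ (u : U) (x y : T F ar U), EqACE E (.node u x y) (.node u y x)
  | assoc : ∀ (u : U) (x y z : T F ar U),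
      EqACE E (.node u x (.node u y z)) (.node u (.node u x y) z)

/-- AC-equality `=_AC`: the smallest congruence containing the AC axioms. -/
abbrev ACeq : T F ar U → T F ar U → Prop := EqACE F ar U ∅

/-- Ground rewriting modulo AC with the rule `l → r` : `Rw l r s t` holds iff `s` rewrites
to `t` modulo AC by `l → r` at some position.  The first two constructors are the two kinds
of rewriting steps at the considered position (plain and extended), the last three close the
relation under all positions. -/
inductive Rw (l r : T F ar U) : T F ar U → T F ar U → Prop where
  | plain : ∀ {s : T F ar U}, ACeq F ar U s l → Rw l r s r
  | ext : ∀ (u : U) (l₁ l₂ : T F ar U) {s : T F ar U} (s' : T F ar U),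
      l = .node u l₁ l₂ → ACeq F ar U s (.node u l s') → Rw l r s (.node u r s')
  | congr_app : ∀ (f : F) (ts : Fin (ar f) → T F ar U) (i : Fin (ar f)) {t : T F ar U},
      Rw l r (ts i) t → Rw l r (.app f ts) (.app f (Function.update ts i t))
  | nodeL : ∀ (u : U) {s t : T F ar U} (w : T F ar U),
      Rw l r s t → Rw l r (.node u s w) (.node u t w)
  | nodeR : ∀ (u : U) (w : T F ar U) {s t : T F ar U},
      Rw l r s t → Rw l r (.node u w s) (.node u w t)

open Classical in
/-- The multiset `𝒜_u(t)` of `u`-aliens of a term `t`. -/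
noncomputable def aliens (u : U) : T F ar U → Multiset (T F ar U)
  | .node u' t₁ t₂ => if u' = u then aliens u t₁ + aliens u t₂ else {T.node u' t₁ t₂}
  | .app f ts => {T.app f ts}

/-- `comb1 u s₁ [s₂,…,sₙ]` is the right comb `u(s₁, u(s₂, …, u(s_{n-1}, sₙ)…))`. -/
def comb1 (u : U) : T F ar U → List (T F ar U) → T F ar U
  | t, [] => t
  | t, s :: ss => .node u t (comb1 u s ss)

/-- The AC canonizer `can_AC` (w.r.t. the fixed linear order `⊴` on terms): under each AC
symbol `u` it collects the `u`-aliens of the canonized arguments, sorts them w.r.t. `⊴`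
and rebuilds a right comb.  (The `[]` branch is unreachable: the multiset of aliens always
has at least two elements.) -/
noncomputable def canAC [LinearOrder (T F ar U)] : T F ar U → T F ar U
  | .app f ts => .app f (fun i => canAC (ts i))
  | .node u t₁ t₂ =>
      match (aliens F ar U u (canAC t₁) + aliens F ar U u (canAC t₂)).sort (· ≤ ·) with
      | [] => .node u (canAC t₁) (canAC t₂)
      | s :: ss => comb1 F ar U u s ss

/-!
Modulo AC, the ground terms form a commutative semigroup under each AC symbol `u`. In this
semigroup the class of a term is the product of the classes of its `u`-aliens, and the class of a
right comb is the product of the classes of its entries. A product does not depend on the order of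
its factors, so a term is AC-equal to the right comb over any enumeration of its `u`-aliens, in
particular over the sorted one built by the canonizer. On the other hand, a rewriting step only
replaces a subterm by one that is equal to it modulo AC and the rule, so that it stays inside a
class of the congruence generated by AC and the rule.
-/

section Canonizer

variable {F ar U}

theorem EqACE.mono {E E' : Set (T F ar U × T F ar U)} (hE : E ⊆ E') {s t : T F ar U}
    (h : EqACE F ar U E s t) : EqACE F ar U E' s t := by
  induction h with
  | ax h => exact .ax (hE h)
  | refl t => exact .refl t
  | symm _ ih => exact ih.symm
  | trans _ _ ih₁ ih₂ => exact ih₁.trans ih₂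
  | congr_app f ts ts' _ ih => exact .congr_app f ts ts' ih
  | congr_node u _ _ ih₁ ih₂ => exact .congr_node u ih₁ ih₂
  | comm u x y => exact .comm u x y
  | assoc u x y z => exact .assoc u x y z

theorem ACeq.eqACE {E : Set (T F ar U × T F ar U)} {s t : T F ar U} (h : ACeq F ar U s t) :
    EqACE F ar U E s t :=
  h.mono (Set.empty_subset E)

theorem EqACE.congr_app_update {E : Set (T F ar U × T F ar U)} (f : F)
    (ts : Fin (ar f) → T F ar U) {i : Fin (ar f)} {t : T F ar U}
    (h : EqACE F ar U E (ts i) t) :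
    EqACE F ar U E (.app f ts) (.app f (Function.update ts i t)) := by
  refine .congr_app f _ _ fun j => ?_
  obtain rfl | hj := eq_or_ne j i
  · rwa [Function.update_self]
  · rw [Function.update_of_ne hj]
    exact .refl _

theorem Rw.eqACE {l r s t : T F ar U} (h : Rw F ar U l r s t) :
    EqACE F ar U {(l, r)} s t := by
  have rule : EqACE F ar U {(l, r)} l r := .ax rfl
  induction h with
  | plain hs => exact hs.eqACE.trans rule
  | ext u _ _ s' _ hs => exact hs.eqACE.trans (.congr_node u rule (.refl s'))
  | congr_app f ts i _ ih => exact .congr_app_update f ts ih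
  | nodeL u w _ ih => exact .congr_node u ih (.refl w)
  | nodeR u w _ ih => exact .congr_node u (.refl w) ih

section Product

variable {M : Type*} {u : U} {φ : T F ar U → M}

theorem map_comb1 [Monoid M] (hφ : ∀ x y, φ (.node u x y) = φ x * φ y) (s : T F ar U)
    (ss : List (T F ar U)) : φ (comb1 F ar U u s ss) = ((s :: ss).map φ).prod := by
  induction ss generalizing s with
  | nil => simp [comb1]
  | cons s' ss ih => rw [comb1, hφ, ih, List.map_cons (a := s), List.prod_cons]

theorem aliens_node_self (u : U) (t₁ t₂ : T F ar U) :
    aliens F ar U u (.node u t₁ t₂) = aliens F ar U u t₁ + aliens F ar U u t₂ := by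
  rw [aliens, if_pos rfl]

theorem aliens_node_of_ne {u v : U} (h : v ≠ u) (t₁ t₂ : T F ar U) :
    aliens F ar U u (.node v t₁ t₂) = {.node v t₁ t₂} := by
  rw [aliens, if_neg h]

theorem prod_map_aliens [CommMonoid M] (hφ : ∀ x y, φ (.node u x y) = φ x * φ y)
    (t : T F ar U) : ((aliens F ar U u t).map φ).prod = φ t := by
  induction t with
  | app f ts => rw [aliens, Multiset.map_singleton, Multiset.prod_singleton]
  | node v t₁ t₂ ih₁ ih₂ =>
    obtain rfl | hv := eq_or_ne v u
    · rw [aliens_node_self, Multiset.map_add, Multiset.prod_add, ih₁, ih₂, hφ]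
    · rw [aliens_node_of_ne hv, Multiset.map_singleton, Multiset.prod_singleton]

theorem map_comb1_of_coe_eq_aliens [CommMonoid M]
    (hφ : ∀ x y, φ (.node u x y) = φ x * φ y) {s t : T F ar U} {ss : List (T F ar U)}
    (h : ↑(s :: ss) = aliens F ar U u t) : φ (comb1 F ar U u s ss) = φ t := by
  rw [map_comb1 hφ, ← prod_map_aliens hφ t, ← h, Multiset.map_coe, Multiset.prod_coe]

end Product

variable (F ar U) in
/-- AC-equality as a setoid, used to form the classes of ground terms modulo AC. -/
def ACeq.setoid : Setoid (T F ar U) where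
  r := ACeq F ar U
  iseqv := ⟨.refl, .symm, .trans⟩

variable (F ar) in
/-- The classes of ground terms modulo AC, as a commutative semigroup under the AC symbol `u`.
The parameter `u` only selects the multiplication. -/
def ACClass (_u : U) : Type := Quotient (ACeq.setoid F ar U)

namespace ACClass

variable {u : U}

/-- The class of a ground term modulo AC, in the semigroup attached to `u`. -/
def mk (u : U) (t : T F ar U) : ACClass F ar u := Quotient.mk _ t

theorem mk_eq_mk_iff {s t : T F ar U} : mk u s = mk u t ↔ ACeq F ar U s t :=
  Quotient.eq

instance : CommSemigroup (ACClass F ar u) where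
  mul := Quotient.map₂ (T.node u) fun _ _ h₁ _ _ h₂ => .congr_node u h₁ h₂
  mul_assoc := by
    rintro ⟨x⟩ ⟨y⟩ ⟨z⟩
    exact mk_eq_mk_iff.mpr (.symm (.assoc u x y z))
  mul_comm := by
    rintro ⟨x⟩ ⟨y⟩
    exact mk_eq_mk_iff.mpr (.comm u x y)

theorem mk_node (s t : T F ar U) : mk u (.node u s t) = mk u s * mk u t := rfl

end ACClass

theorem acEq_comb1_of_coe_eq_aliens {u : U} {s t : T F ar U} {ss : List (T F ar U)}
    (h : ↑(s :: ss) = aliens F ar U u t) : ACeq F ar U t (comb1 F ar U u s ss) := by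
  -- The semigroup has no unit; adjoining one makes products over multisets available.
  let φ (x : T F ar U) : WithOne (ACClass F ar u) := ACClass.mk u x
  have hφ (x y : T F ar U) : φ (.node u x y) = φ x * φ y := by
    rw [← WithOne.coe_mul, ← ACClass.mk_node]
  have hcomb : φ (comb1 F ar U u s ss) = φ t := map_comb1_of_coe_eq_aliens hφ h
  exact (ACClass.mk_eq_mk_iff.mp (WithOne.coe_inj.mp hcomb)).symm

theorem acEq_canAC [LinearOrder (T F ar U)] (t : T F ar U) :
    ACeq F ar U t (canAC F ar U t) := by
  induction t with
  | app f ts ih =>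
    rw [canAC]
    exact .congr_app f _ _ ih
  | node u t₁ t₂ ih₁ ih₂ =>
    have hargs : ACeq F ar U (.node u t₁ t₂) (.node u (canAC F ar U t₁) (canAC F ar U t₂)) :=
      .congr_node u ih₁ ih₂
    rw [canAC]
    split
    next => exact hargs
    next s ss hsort =>
      refine hargs.trans (acEq_comb1_of_coe_eq_aliens ?_)
      rw [← hsort, Multiset.sort_eq, aliens_node_self]

end Canonizer

/-- Soundness of canonized rewriting with the AC canonizer. -/
theorem stmt1 [LinearOrder (T F ar U)] (s t' t l r : T F ar U)
    (h : Rw F ar U l r s t') (hc : canAC F ar U t' = t) :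
    EqACE F ar U {(l, r)} s t := by
  subst hc
  exact h.eqACE.trans (acEq_canAC t').eqACE
end

section
/- Finiteness of the set of reducts of a finitely branching relation contained in a well-founded order: let α be a type, ≺ a well-founded binary relation on α, and r a binary relation on α such that (i) whenever r a b holds then b ≺ a, and (ii) for every a the set {b | r a b} is finite. Then for every a, the set {b | a reduces to b in finitely many r-steps} (the set of b with ReflTransGen r a b) is finite. -/
open Relation

theorem setOf_reflTransGen_eq_insert_biUnion {α : Type*} (r : α → α → Prop) (a : α) :
    {b | ReflTransGen r a b} = insert a (⋃ c ∈ {c | r a c}, {b | ReflTransGen r c b}) := by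
  ext b
  simp [ReflTransGen.cases_head_iff (a := a), eq_comm]

theorem stmt7_general {α : Type*} {r : α → α → Prop} {a : α}
    (hacc : Acc (Function.swap r) a)
    (hfin : ∀ b, ReflTransGen r a b → {c | r b c}.Finite) :
    {b | ReflTransGen r a b}.Finite := by
  induction hacc with
  | intro a _ ih =>
    have hsucc : ∀ c ∈ {c | r a c}, {b | ReflTransGen r c b}.Finite := fun c hac =>
      ih c hac fun b hcb => hfin b (.head hac hcb)
    rw [setOf_reflTransGen_eq_insert_biUnion]
    exact ((hfin a .refl).biUnion hsucc).insert a

/-- The set of reducts of a finitely branching relation contained in a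
well-founded order is finite. -/
theorem stmt7 {α : Type*} (prec : α → α → Prop) (hwf : WellFounded prec)
    (r : α → α → Prop) (hsub : ∀ a b, r a b → prec b a)
    (hfin : ∀ a, {b | r a b}.Finite) (a : α) :
    {b | Relation.ReflTransGen r a b}.Finite := by
  have hwf_swap : WellFounded (Function.swap r) := hwf.mono fun b a hab => hsub a b hab
  exact stmt7_general (hwf_swap.apply a) fun b _ => hfin b
end

section
/- Infinite sequences of multisets over a finite carrier contain an increasing pair (the Higman-style argument used for termination of ground AC-completion): let α be a type, S : Finset α a finite set, and f : ℕ → Multiset α a sequence of multisets such that for every n, every element of f n belongs to S. Then there exist indices i < j such that f i is contained in f j as a multiset (f i ≤ f j). -/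
theorem multiset_le_iff_forall_mem_count_le {α : Type*} [DecidableEq α] {M N : Multiset α} :
    M ≤ N ↔ ∀ a ∈ M, M.count a ≤ N.count a := by
  refine ⟨fun h a _ => Multiset.count_le_of_le a h, fun h => Multiset.le_iff_count.2 fun a => ?_⟩
  by_cases ha : a ∈ M
  · exact h a ha
  · exact (Multiset.count_eq_zero_of_notMem ha).trans_le (Nat.zero_le _)

theorem isPWO_setOf_multiset_forall_mem {α : Type*} {s : Set α} (hs : s.Finite) :
    {M : Multiset α | ∀ a ∈ M, a ∈ s}.IsPWO := by
  classical
  have : Finite s := hs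
  have dickson : WellQuasiOrdered (α := s → ℕ) (· ≤ ·) := Pi.wellQuasiOrderedLE.wqo
  refine Set.partiallyWellOrderedOn_iff_exists_lt.2 fun f hf => ?_
  obtain ⟨i, j, hij, hcount⟩ := dickson fun n a => (f n).count (a : α)
  exact ⟨i, j, hij, multiset_le_iff_forall_mem_count_le.2 fun a ha => hcount ⟨a, hf i a ha⟩⟩

/-- Any infinite sequence of multisets over a finite carrier contains an
increasing pair (Higman-style argument). -/
theorem stmt8 {α : Type*} (S : Finset α) (f : ℕ → Multiset α)
    (hf : ∀ n, ∀ x ∈ f n, x ∈ S) :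
    ∃ i j, i < j ∧ f i ≤ f j :=
  (isPWO_setOf_multiset_forall_mem S.finite_toSet).exists_lt hf
end

section
/- Conservativity of fresh-constant abstraction for ground equational reasoning modulo AC (the key fact behind the correctness of term abstraction, Proposition on abstraction correctness): let c be an uninterpreted symbol of arity 0 and write k for the ground term app c []. Let E be a set of pairs of ground terms and v, s, t ground terms such that the constant c occurs in none of: v, s, t, or any term of any pair of E. Then s =_{AC∪E∪{(v,k)}} t if and only if s =_{AC∪E} t. -/
variable (F : Type) (ar : F → ℕ) (U : Type)

/-- `Occurs c t` : some subterm of `t` has head symbol `c`. -/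
inductive Occurs (c : F) : T F ar U → Prop where
  | head : ∀ ts : Fin (ar c) → T F ar U, Occurs c (.app c ts)
  | arg : ∀ (f : F) (ts : Fin (ar f) → T F ar U) (i : Fin (ar f)),
      Occurs c (ts i) → Occurs c (.app f ts)
  | nodeL : ∀ (u : U) (t₁ t₂ : T F ar U), Occurs c t₁ → Occurs c (.node u t₁ t₂)
  | nodeR : ∀ (u : U) (t₁ t₂ : T F ar U), Occurs c t₂ → Occurs c (.node u t₁ t₂)

section

variable {F : Type} {ar : F → ℕ} {U : Type}

namespace T

variable [DecidableEq F]

/-- The term obtained from a ground term by replacing its outermost subterms headed by `c` by `v`;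
their arguments are discarded, so that `c` may have any arity. It eliminates an abstraction constant
`c` in favour of the term `v` that it abbreviates. -/
def replaceHead (c : F) (v : T F ar U) : T F ar U → T F ar U
  | .app f ts => if f = c then v else .app f fun i => replaceHead c v (ts i)
  | .node u t₁ t₂ => .node u (replaceHead c v t₁) (replaceHead c v t₂)

lemma replaceHead_app_self (c : F) (v : T F ar U) (ts : Fin (ar c) → T F ar U) :
    replaceHead c v (app c ts) = v :=
  if_pos rfl

lemma replaceHead_app_of_ne {c f : F} (hf : f ≠ c) (v : T F ar U) (ts : Fin (ar f) → T F ar U) :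
    replaceHead c v (app f ts) = app f fun i => replaceHead c v (ts i) :=
  if_neg hf

lemma replaceHead_node (c : F) (v : T F ar U) (u : U) (t₁ t₂ : T F ar U) :
    replaceHead c v (node u t₁ t₂) = node u (replaceHead c v t₁) (replaceHead c v t₂) :=
  rfl

lemma replaceHead_of_not_occurs {c : F} {t : T F ar U} (ht : ¬ Occurs F ar U c t) (v : T F ar U) :
    replaceHead c v t = t := by
  induction t with
  | app f ts ih =>
    have hf : f ≠ c := by
      rintro rfl
      exact ht (.head ts)
    have hts (i : Fin (ar f)) : replaceHead c v (ts i) = ts i :=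
      ih i fun hi => ht (.arg f ts i hi)
    simp only [replaceHead_app_of_ne hf, hts]
  | node u t₁ t₂ ih₁ ih₂ =>
    rw [replaceHead_node, ih₁ fun h₁ => ht (.nodeL u t₁ t₂ h₁),
      ih₂ fun h₂ => ht (.nodeR u t₁ t₂ h₂)]

end T

namespace EqACE

variable {E E' : Set (T F ar U × T F ar U)} {s t : T F ar U}

lemma map {φ : T F ar U → T F ar U}
    (hax : ∀ a b, (a, b) ∈ E → EqACE F ar U E' (φ a) (φ b))
    (happ : ∀ (f : F) (ts ts' : Fin (ar f) → T F ar U),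
      (∀ i, EqACE F ar U E' (φ (ts i)) (φ (ts' i))) →
        EqACE F ar U E' (φ (.app f ts)) (φ (.app f ts')))
    (hnode : ∀ u a b, φ (.node u a b) = .node u (φ a) (φ b))
    (h : EqACE F ar U E s t) : EqACE F ar U E' (φ s) (φ t) := by
  induction h with
  | ax hst => exact hax _ _ hst
  | refl t => exact .refl (φ t)
  | symm _ ih => exact .symm ih
  | trans _ _ ih₁ ih₂ => exact .trans ih₁ ih₂
  | congr_app f ts ts' _ ih => exact happ f ts ts' ih
  | congr_node u _ _ ih₁ ih₂ => simpa only [hnode] using .congr_node u ih₁ ih₂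
  | comm u x y => simpa only [hnode] using .comm u (φ x) (φ y)
  | assoc u x y z => simpa only [hnode] using .assoc u (φ x) (φ y) (φ z)

lemma mono_s10 (hE : E ⊆ E') (h : EqACE F ar U E s t) : EqACE F ar U E' s t :=
  h.map (φ := id) (fun _ _ hab => .ax (hE hab)) .congr_app fun _ _ _ => rfl

lemma replaceHead [DecidableEq F] {c : F} {v : T F ar U}
    (hax : ∀ a b, (a, b) ∈ E → EqACE F ar U E' (T.replaceHead c v a) (T.replaceHead c v b))
    (h : EqACE F ar U E s t) : EqACE F ar U E' (T.replaceHead c v s) (T.replaceHead c v t) := by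
  refine h.map hax (fun f ts ts' hts => ?_) (T.replaceHead_node c v)
  by_cases hf : f = c
  · subst hf
    simp only [T.replaceHead_app_self]
    exact .refl v
  · simp only [T.replaceHead_app_of_ne hf]
    exact .congr_app f _ _ hts

end EqACE

theorem stmt10_general {c : F} (ts₀ : Fin (ar c) → T F ar U)
    {E : Set (T F ar U × T F ar U)} {v s t : T F ar U}
    (hv : ¬ Occurs F ar U c v) (hs : ¬ Occurs F ar U c s) (ht : ¬ Occurs F ar U c t)
    (hE : ∀ p ∈ E, ¬ Occurs F ar U c p.1 ∧ ¬ Occurs F ar U c p.2) :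
    EqACE F ar U (E ∪ {(v, T.app c ts₀)}) s t ↔ EqACE F ar U E s t := by
  classical
  refine ⟨fun h => ?_, EqACE.mono_s10 Set.subset_union_left⟩
  have hax : ∀ a b, (a, b) ∈ E ∪ {(v, T.app c ts₀)} →
      EqACE F ar U E (T.replaceHead c v a) (T.replaceHead c v b) := by
    rintro a b (hab | hab)
    · obtain ⟨ha, hb⟩ := hE _ hab
      rw [T.replaceHead_of_not_occurs ha, T.replaceHead_of_not_occurs hb]
      exact .ax hab
    · obtain ⟨rfl, rfl⟩ := Prod.mk.inj hab
      rw [T.replaceHead_of_not_occurs hv, T.replaceHead_app_self]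
      exact .refl a
  simpa only [T.replaceHead_of_not_occurs hs, T.replaceHead_of_not_occurs ht]
    using h.replaceHead hax

end

/-- Conservativity of fresh-constant abstraction for ground equational reasoning modulo
AC: adding an equation `v ≈ k` where `k` is a fresh constant is conservative.
(Since `ar c = 0`, `T.app c ts0` is the ground term `app c []`.) -/
theorem stmt10 (c : F) (hc : ar c = 0) (ts0 : Fin (ar c) → T F ar U)
    (E : Set (T F ar U × T F ar U)) (v s t : T F ar U)
    (hv : ¬ Occurs F ar U c v) (hs : ¬ Occurs F ar U c s) (ht : ¬ Occurs F ar U c t)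
    (hE : ∀ p ∈ E, ¬ Occurs F ar U c p.1 ∧ ¬ Occurs F ar U c p.2) :
    EqACE F ar U (E ∪ {(v, T.app c ts0)}) s t ↔ EqACE F ar U E s t :=
  stmt10_general ts0 hv hs ht hE
end

section
/- Cardinality of an AC-equivalence class of a flat term: consider ground terms over a signature with a single binary AC symbol u and constants c₁, …, c_{n+1} (uninterpreted symbols of arity 0) that are pairwise distinct, with n ≥ 1. Let t be the right comb u(c₁, u(c₂, …, u(c_n, c_{n+1})…)). Then the set {t' | t' =_AC t} of ground terms AC-equal to t is finite and has exactly (2n)!/n! elements. -/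
variable (F : Type) (ar : F → ℕ) (U : Type)

namespace ACClass

section FreeMagma

variable {α : Type*}

/-- The letters of a nonassociative word, read from left to right. -/
def leaves : FreeMagma α → List α
  | .of a => [a]
  | x * y => leaves x ++ leaves y

/-- The bracketing of a nonassociative word, as the binary tree of its products; a letter becomes
the empty tree, so that a word with `n` products has a shape with `n` nodes. -/
def shape : FreeMagma α → BinaryTree Unit
  | .of _ => .nil
  | x * y => .node () (shape x) (shape y)

@[simp] lemma leaves_of (a : α) : leaves (.of a) = [a] := rfl

@[simp] lemma leaves_mul (x y : FreeMagma α) : leaves (x * y) = leaves x ++ leaves y := rfl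

@[simp] lemma shape_of (a : α) : shape (.of a) = .nil := rfl

@[simp] lemma shape_mul (x y : FreeMagma α) :
    shape (x * y) = .node () (shape x) (shape y) := rfl

lemma length_leaves (x : FreeMagma α) : (leaves x).length = (shape x).numNodes + 1 := by
  induction x with
  | ih1 a => rfl
  | ih2 x y ihx ihy =>
    simp only [leaves_mul, shape_mul, List.length_append, BinaryTree.numNodes, ihx, ihy]
    omega

lemma eq_of_shape_eq_of_leaves_eq {x y : FreeMagma α} (hs : shape x = shape y)
    (hl : leaves x = leaves y) : x = y := by
  induction x generalizing y with
  | ih1 a =>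
    cases y with
    | of b => rw [List.singleton_inj.mp hl]
    | mul y₁ y₂ => simp at hs
  | ih2 x₁ x₂ ih₁ ih₂ =>
    cases y with
    | of b => simp at hs
    | mul y₁ y₂ =>
      simp only [FreeMagma.mul_eq, shape_mul, leaves_mul, BinaryTree.node.injEq, true_and] at hs hl
      -- equal shapes force the two leaf lists to split at the same place
      obtain ⟨hl₁, hl₂⟩ := List.append_inj hl (by rw [length_leaves, length_leaves, hs.1])
      rw [ih₁ hs.1 hl₁, ih₂ hs.2 hl₂, FreeMagma.mul_eq]

lemma shape_leaves_injective :
    Function.Injective fun x : FreeMagma α => (shape x, leaves x) := fun _ _ h =>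
  eq_of_shape_eq_of_leaves_eq (congrArg Prod.fst h) (congrArg Prod.snd h)

lemma exists_shape_eq_leaves_eq (s : BinaryTree Unit) {l : List α}
    (h : l.length = s.numNodes + 1) : ∃ x : FreeMagma α, shape x = s ∧ leaves x = l := by
  induction s generalizing l with
  | nil =>
    obtain ⟨a, rfl⟩ := List.length_eq_one_iff.mp h
    exact ⟨.of a, rfl, rfl⟩
  | node _ s₁ s₂ ih₁ ih₂ =>
    rw [BinaryTree.numNodes] at h
    obtain ⟨x₁, hs₁, hl₁⟩ := ih₁ (l := l.take (s₁.numNodes + 1)) (by grind)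
    obtain ⟨x₂, hs₂, hl₂⟩ := ih₂ (l := l.drop (s₁.numNodes + 1)) (by grind)
    exact ⟨x₁ * x₂, by rw [shape_mul, hs₁, hs₂],
      by rw [leaves_mul, hl₁, hl₂, List.take_append_drop]⟩

lemma image_shape_leaves_setOf_leaves_perm {l : List α} {n : ℕ} (hl : l.length = n + 1) :
    (fun x : FreeMagma α => (shape x, leaves x)) '' {x | (leaves x).Perm l} =
      (BinaryTree.treesOfNumNodesEq n : Set (BinaryTree Unit)) ×ˢ {l' | l'.Perm l} := by
  ext ⟨s, l'⟩
  simp only [Set.mem_image, Set.mem_ofPred_eq, Prod.mk.injEq, Set.mem_prod, Finset.mem_coe,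
    BinaryTree.mem_treesOfNumNodesEq]
  constructor
  · rintro ⟨x, hx, rfl, rfl⟩
    have hlen := hx.length_eq
    rw [length_leaves, hl] at hlen
    exact ⟨Nat.succ_injective hlen, hx⟩
  · rintro ⟨hs, hl'⟩
    obtain ⟨x, rfl, rfl⟩ := exists_shape_eq_leaves_eq s (by rw [hl'.length_eq, hl, hs])
    exact ⟨x, hl', rfl, rfl⟩

lemma encard_setOf_perm {l : List α} (hl : l.Nodup) :
    {l' : List α | l'.Perm l}.encard = l.length.factorial := by
  classical
  have h : {l' : List α | l'.Perm l} = (l.permutations.toFinset : Set (List α)) := by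
    ext l'
    simp
  rw [h, Set.encard_coe_eq_coe_finsetCard,
    List.toFinset_card_of_nodup (List.nodup_permutations l hl), List.length_permutations]

lemma catalan_mul_factorial_succ (n : ℕ) :
    catalan n * (n + 1).factorial = (2 * n).factorial / n.factorial := by
  refine (Nat.div_eq_of_eq_mul_left n.factorial_pos ?_).symm
  calc (2 * n).factorial
      = n.centralBinom * n.factorial * n.factorial := by
        rw [Nat.centralBinom_eq_two_mul_choose, two_mul, Nat.add_choose_mul_factorial_mul_factorial]
    _ = catalan n * (n + 1).factorial * n.factorial := by
        rw [← succ_mul_catalan_eq_centralBinom, Nat.factorial_succ]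
        ring

lemma encard_setOf_leaves_perm {l : List α} {n : ℕ} (hnodup : l.Nodup) (hl : l.length = n + 1) :
    {x : FreeMagma α | (leaves x).Perm l}.encard =
      ((2 * n).factorial / n.factorial : ℕ) := by
  rw [← shape_leaves_injective.encard_image, image_shape_leaves_setOf_leaves_perm hl,
    Set.encard_prod, Set.encard_coe_eq_coe_finsetCard,
    BinaryTree.treesOfNumNodesEq_card_eq_catalan, encard_setOf_perm hnodup, hl,
    ← catalan_mul_factorial_succ, Nat.cast_mul]

section CommSemigroup

variable {S : Type*} [CommSemigroup S] (φ : FreeMagma α →ₙ* S)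

-- The unit is adjoined only because a product over a list needs one.
lemma coe_map_eq_prod_leaves (x : FreeMagma α) :
    (φ x : WithOne S) = ((leaves x).map fun a => (φ (.of a) : WithOne S)).prod := by
  induction x with
  | ih1 a => simp
  | ih2 x y ihx ihy => simp [ihx, ihy]

lemma map_eq_of_leaves_perm {x y : FreeMagma α} (h : (leaves x).Perm (leaves y)) : φ x = φ y := by
  rw [← WithOne.coe_inj, coe_map_eq_prod_leaves, coe_map_eq_prod_leaves, (h.map _).prod_eq]

end CommSemigroup

end FreeMagma

section Terms

variable {F U : Type} {ar : F → ℕ}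

/-- The constants of a signature: its uninterpreted symbols of arity `0`. -/
abbrev Constant (ar : F → ℕ) : Type := {f : F // ar f = 0}

/-- A constant, viewed as a term. -/
def constTerm (k : Constant ar) : T F ar U := .app k.1 fun j => (j.cast k.2).elim0

lemma app_eq_constTerm {f : F} (hf : ar f = 0) (ts : Fin (ar f) → T F ar U) :
    T.app f ts = constTerm ⟨f, hf⟩ :=
  congrArg (T.app f) (funext fun j => (j.cast hf).elim0)

/-- The flat term spelled by a nonassociative word in the constants: every product of the word is
read as the AC symbol `u`. -/
def flat (u : U) : FreeMagma (Constant ar) → T F ar U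
  | .of k => constTerm k
  | x * y => .node u (flat u x) (flat u y)

@[simp] lemma flat_of (u : U) (k : Constant ar) : flat u (.of k) = constTerm k := rfl

@[simp] lemma flat_mul (u : U) (x y : FreeMagma (Constant ar)) :
    flat u (x * y) = .node u (flat u x) (flat u y) := rfl

lemma flat_injective (u : U) : Function.Injective (flat (ar := ar) u) := by
  intro x y h
  induction x generalizing y with
  | ih1 k =>
    cases y with
    | of k' => exact congrArg FreeMagma.of (Subtype.ext (T.app.inj h).1)
    | mul y₁ y₂ => cases h
  | ih2 x₁ x₂ ih₁ ih₂ =>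
    cases y with
    | of k' => cases h
    | mul y₁ y₂ =>
      obtain ⟨-, h₁, h₂⟩ := T.node.inj h
      rw [ih₁ h₁, ih₂ h₂, FreeMagma.mul_eq]

lemma exists_flat_eq_comb1 (u : U) (k : Constant ar) (l : List (Constant ar)) :
    ∃ x, flat u x = comb1 F ar U u (constTerm k) (l.map constTerm) ∧ leaves x = k :: l := by
  induction l generalizing k with
  | nil => exact ⟨.of k, rfl, rfl⟩
  | cons k' l ih =>
    obtain ⟨x, hx, hl⟩ := ih k'
    exact ⟨.of k * x, by rw [flat_mul, hx]; rfl, by rw [leaves_mul, hl]; rfl⟩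

/-- The multiset of all occurrences of symbols in a term, an invariant of AC-equality. -/
def symbols : T F ar U → Multiset (F ⊕ U)
  | .app f ts => .inl f ::ₘ ∑ i, symbols (ts i)
  | .node u s t => .inr u ::ₘ (symbols s + symbols t)

lemma symbols_eq_of_aceq {s t : T F ar U} (h : ACeq F ar U s t) : symbols s = symbols t := by
  induction h with
  | ax h => exact absurd h (Set.notMem_empty _)
  | refl => rfl
  | symm _ ih => exact ih.symm
  | trans _ _ ih₁ ih₂ => exact ih₁.trans ih₂
  | congr_app f ts ts' _ ih => simp only [symbols, ih]
  | congr_node u _ _ ih₁ ih₂ => simp only [symbols, ih₁, ih₂]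
  | comm u x y => simp only [symbols, add_comm]
  | assoc u x y z => simp only [symbols, Multiset.cons_add, Multiset.add_cons, add_assoc]

@[simp] lemma symbols_constTerm (k : Constant ar) :
    symbols (constTerm k : T F ar U) = {.inl k.1} := by
  have : IsEmpty (Fin (ar k.1)) := ⟨fun j => (j.cast k.2).elim0⟩
  simp [constTerm, symbols]

lemma mem_range_flat_iff {u : U} {t : T F ar U} :
    t ∈ Set.range (flat u) ↔ ∀ a ∈ symbols t, Sum.elim (ar · = 0) (· = u) a := by
  constructor
  · rintro ⟨x, rfl⟩
    induction x with
    | ih1 k => simpa using k.2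
    | ih2 x y ihx ihy =>
      simp only [flat_mul, symbols, Multiset.mem_cons, Multiset.mem_add]
      rintro a (rfl | ha | ha)
      exacts [rfl, ihx a ha, ihy a ha]
  · induction t with
    | app f ts =>
      intro h
      have hf : ar f = 0 := h (.inl f) (Multiset.mem_cons_self _ _)
      exact ⟨.of ⟨f, hf⟩, (app_eq_constTerm hf ts).symm⟩
    | node v s t ihs iht =>
      intro h
      simp only [symbols, Multiset.mem_cons, Multiset.mem_add] at h
      obtain rfl : v = u := h (.inr v) (.inl rfl)
      obtain ⟨x, rfl⟩ := ihs fun a ha => h a (.inr (.inl ha))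
      obtain ⟨y, rfl⟩ := iht fun a ha => h a (.inr (.inr ha))
      exact ⟨x * y, rfl⟩

lemma filterMap_getLeft?_symbols_flat (u : U) (x : FreeMagma (Constant ar)) :
    (symbols (flat u x)).filterMap Sum.getLeft? = (leaves x).map Subtype.val := by
  induction x with
  | ih1 k =>
    rw [flat_of, symbols_constTerm]
    rfl
  | ih2 x y ihx ihy =>
    rw [flat_mul, symbols, Multiset.filterMap_cons_none _ _ rfl, Multiset.filterMap_add, ihx, ihy,
      leaves_mul, List.map_append, Multiset.coe_add]

lemma leaves_perm_of_aceq_flat {u : U} {x y : FreeMagma (Constant ar)}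
    (h : ACeq F ar U (flat u x) (flat u y)) : (leaves x).Perm (leaves y) := by
  rw [← List.map_perm_map_iff Subtype.val_injective, ← Multiset.coe_eq_coe,
    ← filterMap_getLeft?_symbols_flat u, ← filterMap_getLeft?_symbols_flat u,
    symbols_eq_of_aceq h]

/-- AC-equality as an equivalence relation on terms. -/
def acSetoid (ar : F → ℕ) (U : Type) : Setoid (T F ar U) where
  r := ACeq F ar U
  iseqv := ⟨.refl, .symm, .trans⟩

/-- Terms modulo AC-equality, as a semigroup under the AC symbol `u`. The symbol is a parameter of
the type only in order to select the multiplication. -/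
def ACQuotient (ar : F → ℕ) (_u : U) : Type := Quotient (acSetoid ar U)

instance (u : U) : CommSemigroup (ACQuotient ar u) where
  mul := Quotient.map₂ (T.node u) fun _ _ h₁ _ _ h₂ => .congr_node u h₁ h₂
  mul_assoc := by
    rintro ⟨x⟩ ⟨y⟩ ⟨z⟩
    exact Quotient.sound (EqACE.assoc u x y z).symm
  mul_comm := by
    rintro ⟨x⟩ ⟨y⟩
    exact Quotient.sound (EqACE.comm u x y)

/-- The magma homomorphism sending a word to the class of the flat term it spells. -/
def flatClass (u : U) : FreeMagma (Constant ar) →ₙ* ACQuotient ar u where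
  toFun x := Quotient.mk (acSetoid ar U) (flat u x)
  map_mul' _ _ := rfl

lemma aceq_flat_of_leaves_perm (u : U) {x y : FreeMagma (Constant ar)}
    (h : (leaves x).Perm (leaves y)) : ACeq F ar U (flat u x) (flat u y) :=
  Quotient.exact (map_eq_of_leaves_perm (flatClass u) h)

lemma setOf_aceq_flat (u : U) (x : FreeMagma (Constant ar)) :
    {t | ACeq F ar U t (flat u x)} = flat u '' {y | (leaves y).Perm (leaves x)} := by
  ext t
  constructor
  · intro (h : ACeq F ar U t (flat u x))
    obtain ⟨y, rfl⟩ : t ∈ Set.range (flat u) := by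
      rw [mem_range_flat_iff, symbols_eq_of_aceq h, ← mem_range_flat_iff]
      exact Set.mem_range_self x
    exact ⟨y, leaves_perm_of_aceq_flat h, rfl⟩
  · rintro ⟨y, hy, rfl⟩
    exact aceq_flat_of_leaves_perm u hy

lemma encard_setOf_aceq_flat (u : U) {x : FreeMagma (Constant ar)} {n : ℕ}
    (hnodup : (leaves x).Nodup) (hx : (leaves x).length = n + 1) :
    {t | ACeq F ar U t (flat u x)}.encard = ((2 * n).factorial / n.factorial : ℕ) := by
  rw [setOf_aceq_flat, (flat_injective u).encard_image, encard_setOf_leaves_perm hnodup hx]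

end Terms

end ACClass

open ACClass

theorem stmt11_general {F U : Type} {ar : F → ℕ} (u : U) {n : ℕ} {k : Fin (n + 1) → Constant ar}
    (hk : Function.Injective k) {t : T F ar U}
    (ht : t = comb1 F ar U u (constTerm (k 0))
      (((List.finRange (n + 1)).drop 1).map fun i => constTerm (k i))) :
    {t' | ACeq F ar U t' t}.Finite ∧
      {t' | ACeq F ar U t' t}.ncard = (2 * n).factorial / n.factorial := by
  obtain ⟨x, hx, hleaves⟩ :=
    exists_flat_eq_comb1 u (k 0) (((List.finRange (n + 1)).drop 1).map k)
  obtain rfl : t = flat u x := by rw [ht, hx, List.map_map]; rfl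
  replace hleaves : leaves x = (List.finRange (n + 1)).map k := by
    rw [hleaves, List.finRange_succ]; rfl
  have hcard := encard_setOf_aceq_flat u (n := n)
    (hleaves ▸ (List.nodup_finRange _).map hk) (by simp [hleaves])
  exact ⟨Set.finite_of_encard_eq_coe hcard, by rw [Set.ncard, hcard, ENat.toNat_natCast]⟩

/-- The AC-equivalence class of the right comb `u(c₀, u(c₁, …, u(c_{n-1}, cₙ)…))` over
`n+1` pairwise distinct constants and a single AC symbol has exactly `(2n)!/n!` elements. -/
theorem stmt11 (n : ℕ) (hn : 1 ≤ n)
    (c : Fin (n + 1) → T (Fin (n + 1)) (fun _ => 0) Unit)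
    (hc : ∀ i, c i = T.app i (fun j => j.elim0))
    (t : T (Fin (n + 1)) (fun _ => 0) Unit)
    (ht : t = comb1 _ _ _ () (c 0) (((List.finRange (n + 1)).drop 1).map c)) :
    {t' | ACeq _ _ _ t' t}.Finite ∧
      {t' | ACeq _ _ _ t' t}.ncard = (2 * n).factorial / n.factorial :=
  stmt11_general () (k := fun i => ⟨i, rfl⟩) (fun _ _ h => congrArg Subtype.val h)
    (by rw [ht, funext hc]; rfl)
end
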